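/- All of the following one-sided third derivatives vanish at r = 0: ∂_r³ p₋, ∂_r³ p₊, ∂_r³ ρ₋, ∂_r³ ρ₊, ∂_r³ s₋, ∂_r³ s₊, ∂_r³ (M₋²), ∂_r³ (M₊²), and ∂_r³ q₊. (Second part of Lemma 3.1 of the paper, case j = 3.) -/

import Mathlib

open Set Filter Topology

theorem lb1 {r : ℝ} (hr : 0 < r) {f g : ℝ → ℝ}
    (hf : ContDiffWithinAt ℝ 3 f (Icc 0 r) 0) (hg : ContDiffWithinAt ℝ 3 g (Icc 0 r) 0) :
    iteratedDerivWithin 1 (fun x => f x * g x) (Icc 0 r) 0 =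
      f 0 * iteratedDerivWithin 1 g (Icc 0 r) 0 + iteratedDerivWithin 1 f (Icc 0 r) 0 * g 0 := by
  have := iteratedDerivWithin_mul (n := 1) (left_mem_Icc.2 hr.le) (uniqueDiffOn_Icc hr)
    (hf.of_le (by norm_num)) (hg.of_le (by norm_num))
  simp [Finset.sum_range_succ] at this
  simpa [Pi.mul_def] using this

theorem lb2 {r : ℝ} (hr : 0 < r) {f g : ℝ → ℝ}
    (hf : ContDiffWithinAt ℝ 2 f (Icc 0 r) 0) (hg : ContDiffWithinAt ℝ 2 g (Icc 0 r) 0) :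
    iteratedDerivWithin 2 (fun x => f x * g x) (Icc 0 r) 0 =
      f 0 * iteratedDerivWithin 2 g (Icc 0 r) 0
      + 2 * (iteratedDerivWithin 1 f (Icc 0 r) 0 * iteratedDerivWithin 1 g (Icc 0 r) 0)
      + iteratedDerivWithin 2 f (Icc 0 r) 0 * g 0 := by
  have := iteratedDerivWithin_mul (n := 2) (left_mem_Icc.2 hr.le) (uniqueDiffOn_Icc hr)
    (hf.of_le (by norm_num)) (hg.of_le (by norm_num))
  simp only [Finset.sum_range_succ, Finset.range_zero, Finset.sum_empty] at this
  norm_num [Nat.choose] at this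
  simp only [Pi.mul_def] at this
  rw [this, iteratedDerivWithin_one, iteratedDerivWithin_one]; ring

theorem lb3 {r : ℝ} (hr : 0 < r) {f g : ℝ → ℝ}
    (hf : ContDiffWithinAt ℝ 3 f (Icc 0 r) 0) (hg : ContDiffWithinAt ℝ 3 g (Icc 0 r) 0) :
    iteratedDerivWithin 3 (fun x => f x * g x) (Icc 0 r) 0 =
      f 0 * iteratedDerivWithin 3 g (Icc 0 r) 0
      + 3 * (iteratedDerivWithin 1 f (Icc 0 r) 0 * iteratedDerivWithin 2 g (Icc 0 r) 0)
      + 3 * (iteratedDerivWithin 2 f (Icc 0 r) 0 * iteratedDerivWithin 1 g (Icc 0 r) 0)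
      + iteratedDerivWithin 3 f (Icc 0 r) 0 * g 0 := by
  have := iteratedDerivWithin_mul (n := 3) (left_mem_Icc.2 hr.le) (uniqueDiffOn_Icc hr)
    (hf.of_le (by norm_num)) (hg.of_le (by norm_num))
  simp only [Finset.sum_range_succ, Finset.range_zero, Finset.sum_empty] at this
  norm_num [Nat.choose] at this
  simp only [Pi.mul_def] at this
  rw [this, iteratedDerivWithin_one, iteratedDerivWithin_one]; ring

def EV1 (r : ℝ) (f : ℝ → ℝ) : Prop :=
  ContDiffWithinAt ℝ 3 f (Icc 0 r) 0 ∧ iteratedDerivWithin 1 f (Icc 0 r) 0 = 0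

def EV3 (r : ℝ) (f : ℝ → ℝ) : Prop :=
  EV1 r f ∧ iteratedDerivWithin 3 f (Icc 0 r) 0 = 0

theorem EV1.const (r c : ℝ) : EV1 r (fun _ => c) :=
  ⟨contDiffWithinAt_const, by simp [iteratedDerivWithin_const]⟩

theorem EV3.const (r c : ℝ) : EV3 r (fun _ => c) :=
  ⟨.const r c, by simp [iteratedDerivWithin_const]⟩

theorem EV1.mul {r : ℝ} (hr : 0 < r) {f g : ℝ → ℝ} (hf : EV1 r f) (hg : EV1 r g) :
    EV1 r (fun x => f x * g x) :=
  ⟨hf.1.mul hg.1, by rw [lb1 hr hf.1 hg.1, hf.2, hg.2]; ring⟩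

theorem EV3.mul {r : ℝ} (hr : 0 < r) {f g : ℝ → ℝ} (hf : EV3 r f) (hg : EV3 r g) :
    EV3 r (fun x => f x * g x) :=
  ⟨hf.1.mul hr hg.1, by rw [lb3 hr hf.1.1 hg.1.1, hf.2, hg.2, hf.1.2, hg.1.2]; ring⟩

theorem EV1.add {r : ℝ} (hr : 0 < r) {f g : ℝ → ℝ} (hf : EV1 r f) (hg : EV1 r g) :
    EV1 r (fun x => f x + g x) :=
  ⟨hf.1.add hg.1, by
    rw [iteratedDerivWithin_fun_add (left_mem_Icc.2 hr.le) (uniqueDiffOn_Icc hr)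
      (hf.1.of_le (by norm_num)) (hg.1.of_le (by norm_num)), hf.2, hg.2]; ring⟩

theorem EV3.add {r : ℝ} (hr : 0 < r) {f g : ℝ → ℝ} (hf : EV3 r f) (hg : EV3 r g) :
    EV3 r (fun x => f x + g x) :=
  ⟨hf.1.add hr hg.1, by
    rw [iteratedDerivWithin_fun_add (left_mem_Icc.2 hr.le) (uniqueDiffOn_Icc hr)
      (hf.1.1.of_le (by norm_num)) (hg.1.1.of_le (by norm_num)), hf.2, hg.2]; ring⟩

theorem EV1.congr {r : ℝ} (hr : 0 < r) {f g : ℝ → ℝ} (hf : EV1 r f)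
    (h : g =ᶠ[𝓝[Icc 0 r] 0] f) : EV1 r g := by
  have h0 : g 0 = f 0 := h.self_of_nhdsWithin (left_mem_Icc.2 hr.le)
  exact ⟨hf.1.congr_of_eventuallyEq h h0, by rw [h.iteratedDerivWithin_eq h0, hf.2]⟩

theorem EV3.congr {r : ℝ} (hr : 0 < r) {f g : ℝ → ℝ} (hf : EV3 r f)
    (h : g =ᶠ[𝓝[Icc 0 r] 0] f) : EV3 r g := by
  have h0 : g 0 = f 0 := h.self_of_nhdsWithin (left_mem_Icc.2 hr.le)
  exact ⟨hf.1.congr hr h, by rw [h.iteratedDerivWithin_eq h0, hf.2]⟩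

theorem inv_ev {r : ℝ} {f : ℝ → ℝ} (hf : ContDiffWithinAt ℝ 3 f (Icc 0 r) 0)
    (h0 : f 0 ≠ 0) : (fun x => f x * (f x)⁻¹) =ᶠ[𝓝[Icc 0 r] 0] fun _ => (1:ℝ) := by
  filter_upwards [hf.continuousWithinAt.eventually_ne h0] with x hx
  exact mul_inv_cancel₀ hx

theorem EV1.inv {r : ℝ} (hr : 0 < r) {f : ℝ → ℝ} (hf : EV1 r f) (h0 : f 0 ≠ 0) :
    EV1 r (fun x => (f x)⁻¹) := by
  have hi : ContDiffWithinAt ℝ 3 (fun x => (f x)⁻¹) (Icc 0 r) 0 := hf.1.inv h0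
  have h := ((EV1.const r 1).congr hr (inv_ev hf.1 h0)).2
  rw [lb1 hr hf.1 hi, hf.2, zero_mul, add_zero] at h
  exact ⟨hi, (mul_eq_zero.1 h).resolve_left h0⟩

theorem EV3.inv {r : ℝ} (hr : 0 < r) {f : ℝ → ℝ} (hf : EV3 r f) (h0 : f 0 ≠ 0) :
    EV3 r (fun x => (f x)⁻¹) := by
  have hi := hf.1.inv hr h0
  have h := ((EV3.const r 1).congr hr (inv_ev hf.1.1 h0)).2
  rw [lb3 hr hf.1.1 hi.1, hf.2, hf.1.2, hi.2] at h
  refine ⟨hi, (mul_eq_zero.1 (?_ : f 0 * _ = 0)).resolve_left h0⟩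
  linarith

theorem EV1.div {r : ℝ} (hr : 0 < r) {f g : ℝ → ℝ} (hf : EV1 r f) (hg : EV1 r g) (h0 : g 0 ≠ 0) :
    EV1 r (fun x => f x / g x) := by
  simpa only [div_eq_mul_inv] using hf.mul hr (hg.inv hr h0)

theorem EV3.div {r : ℝ} (hr : 0 < r) {f g : ℝ → ℝ} (hf : EV3 r f) (hg : EV3 r g) (h0 : g 0 ≠ 0) :
    EV3 r (fun x => f x / g x) := by
  simpa only [div_eq_mul_inv] using hf.mul hr (hg.inv hr h0)

theorem EV1.cmul {r : ℝ} (hr : 0 < r) {f : ℝ → ℝ} (c : ℝ) (hf : EV1 r f) :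
    EV1 r (fun x => c * f x) := (EV1.const r c).mul hr hf

theorem EV3.cmul {r : ℝ} (hr : 0 < r) {f : ℝ → ℝ} (c : ℝ) (hf : EV3 r f) :
    EV3 r (fun x => c * f x) := (EV3.const r c).mul hr hf

theorem EV1.sub {r : ℝ} (hr : 0 < r) {f g : ℝ → ℝ} (hf : EV1 r f) (hg : EV1 r g) :
    EV1 r (fun x => f x - g x) := by
  have := hf.add hr (hg.cmul hr (-1))
  simpa only [neg_one_mul, ← sub_eq_add_neg] using this

theorem EV3.sub {r : ℝ} (hr : 0 < r) {f g : ℝ → ℝ} (hf : EV3 r f) (hg : EV3 r g) :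
    EV3 r (fun x => f x - g x) := by
  have := hf.add hr (hg.cmul hr (-1))
  simpa only [neg_one_mul, ← sub_eq_add_neg] using this

theorem EV1.sq {r : ℝ} (hr : 0 < r) {f : ℝ → ℝ} (hf : EV1 r f) :
    EV1 r (fun x => f x ^ 2) := by
  simpa only [pow_two] using hf.mul hr hf

theorem EV3.sq {r : ℝ} (hr : 0 < r) {f : ℝ → ℝ} (hf : EV3 r f) :
    EV3 r (fun x => f x ^ 2) := by
  simpa only [pow_two] using hf.mul hr hf

theorem EV3.log {r : ℝ} (hr : 0 < r) {f : ℝ → ℝ} (hf : EV3 r f) (h0 : f 0 ≠ 0) :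
    EV3 r (fun x => Real.log (f x)) := by
  have hm : (0:ℝ) ∈ Icc 0 r := left_mem_Icc.2 hr.le
  have hu := uniqueDiffOn_Icc hr
  have hl : ContDiffWithinAt ℝ 3 (fun x => Real.log (f x)) (Icc 0 r) 0 := hf.1.1.log h0
  have hl2 : ContDiffWithinAt ℝ 2 (derivWithin (fun x => Real.log (f x)) (Icc 0 r)) (Icc 0 r) 0 :=
    hl.derivWithin hu (by norm_num) hm
  have e : derivWithin f (Icc 0 r) =ᶠ[𝓝[Icc 0 r] 0]
      fun x => f x * derivWithin (fun x => Real.log (f x)) (Icc 0 r) x := by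
    have hd := (hf.1.1.of_le (m := 1) (by norm_num)).eventually (by norm_num)
    rw [insert_eq_of_mem hm] at hd
    filter_upwards [hf.1.1.continuousWithinAt.eventually_ne h0, hd, self_mem_nhdsWithin]
      with x hx hx' hxm
    rw [derivWithin.log (hx'.differentiableWithinAt (by norm_num)) hx (hu x hxm)]
    field_simp
  have e0 := e.self_of_nhdsWithin hm
  have f1 : derivWithin f (Icc 0 r) 0 = 0 := by rw [← iteratedDerivWithin_one]; exact hf.1.2
  have l1 : derivWithin (fun x => Real.log (f x)) (Icc 0 r) 0 = 0 := by
    rw [f1] at e0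
    exact (mul_eq_zero.1 e0.symm).resolve_left h0
  refine ⟨⟨hl, by rw [iteratedDerivWithin_one, l1]⟩, ?_⟩
  have e3 := e.iteratedDerivWithin_eq (n := 2) e0
  have f3 := hf.2
  rw [iteratedDerivWithin_succ'] at f3
  rw [lb2 hr (hf.1.1.of_le (by norm_num)) hl2, hf.1.2, f3, l1] at e3
  rw [iteratedDerivWithin_succ']
  refine (mul_eq_zero.1 (?_ : f 0 * _ = 0)).resolve_left h0
  linarith

theorem w_sq {r : ℝ} (hr : 0 < r) {w : ℝ → ℝ} (hw : ContDiffWithinAt ℝ 3 w (Icc 0 r) 0)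
    (w0 : w 0 = 0) : EV1 r (fun x => w x ^ 2) ∧ (iteratedDerivWithin 2 w (Icc 0 r) 0 = 0 →
      EV3 r (fun x => w x ^ 2)) := by
  simp only [pow_two]
  have h1 : EV1 r (fun x => w x * w x) := ⟨hw.mul hw, by rw [lb1 hr hw hw, w0]; ring⟩
  exact ⟨h1, fun h => ⟨h1, by rw [lb3 hr hw hw, w0, h]; ring⟩⟩

theorem ode {r : ℝ} (hr : 0 < r) {f G w : ℝ → ℝ} (hf : ContDiffWithinAt ℝ 4 f (Icc 0 r) 0)
    (hG : ContDiffWithinAt ℝ 3 G (Icc 0 r) 0) (hw : ContDiffWithinAt ℝ 3 w (Icc 0 r) 0)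
    (w0 : w 0 = 0)
    (h : ∀ x ∈ Icc 0 r, x * derivWithin f (Icc 0 r) x = G x * w x ^ 2) :
    EV1 r f ∧ (iteratedDerivWithin 2 w (Icc 0 r) 0 = 0 → EV1 r G → EV3 r f) := by
  have hm : (0:ℝ) ∈ Icc 0 r := left_mem_Icc.2 hr.le
  have hu := uniqueDiffOn_Icc hr
  obtain ⟨hs1, hs3⟩ := w_sq hr hw w0
  have hid : ContDiffWithinAt ℝ 3 (fun x : ℝ => x) (Icc 0 r) 0 := contDiffWithinAt_id
  have hd : ContDiffWithinAt ℝ 3 (derivWithin f (Icc 0 r)) (Icc 0 r) 0 :=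
    hf.derivWithin hu (by norm_num) hm
  have i1 : iteratedDerivWithin 1 (fun x : ℝ => x) (Icc 0 r) 0 = 1 := by
    rw [iteratedDerivWithin_one]; exact derivWithin_id _ _ (hu 0 hm)
  have i2 : iteratedDerivWithin 2 (fun x : ℝ => x) (Icc 0 r) 0 = 0 := by
    have := iteratedDerivWithin_id hm hu (n := 2)
    simp at this
    exact this
  have k1 := iteratedDerivWithin_congr (n := 1) h hm
  have k3 := iteratedDerivWithin_congr (n := 3) h hm
  rw [lb1 hr hid hd, lb1 hr hG hs1.1, hs1.2, i1, w0] at k1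
  have f1 : EV1 r f := ⟨hf.of_le (by norm_num), by rw [iteratedDerivWithin_one]; linarith⟩
  refine ⟨f1, fun h2 hG1 => ⟨f1, ?_⟩⟩
  rw [lb3 hr hid hd, lb3 hr hG hs1.1, hs1.2, i1, i2, w0, hG1.2, (hs3 h2).2] at k3
  have f1' := f1.2
  rw [iteratedDerivWithin_one] at f1'
  rw [f1'] at k3
  rw [iteratedDerivWithin_succ']
  linarith

theorem bdd_of_deriv {f : ℝ → ℝ} {δ C : ℝ} (hδ : 0 < δ) (hf : DifferentiableOn ℝ f (Ioo 0 δ))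
    (h : ∀ x ∈ Ioo 0 δ, |deriv f x| ≤ C) : ∃ K, ∀ x ∈ Ioo 0 δ, |f x| ≤ K := by
  have hC : 0 ≤ C := (abs_nonneg _).trans (h (δ/2) ⟨by linarith, by linarith⟩)
  refine ⟨|f (δ/2)| + C * δ, fun x hx => ?_⟩
  have := Convex.norm_image_sub_le_of_norm_deriv_le (𝕜 := ℝ) (f := f) (C := C) (s := Ioo 0 δ)
    (x := δ/2) (y := x)
    (fun y hy => (hf y hy).differentiableAt (Ioo_mem_nhds hy.1 hy.2)) h (convex_Ioo _ _)
    ⟨by linarith, by linarith⟩ hx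
  simp only [Real.norm_eq_abs] at this
  have h2 : |x - δ/2| ≤ δ := abs_le.2 ⟨by linarith [hx.1], by linarith [hx.2]⟩
  have h3 := mul_le_mul_of_nonneg_left h2 hC
  have h4 := abs_add_le (f x - f (δ/2)) (f (δ/2))
  rw [sub_add_cancel] at h4
  linarith

theorem degen {r : ℝ} {f : ℝ → ℝ} {δ : ℝ} (hδ : 0 < δ) (hδr : δ ≤ r)
    (hf : ContDiffOn ℝ 2 f (Ioo 0 δ)) (hlim : Tendsto (fun x => |f x|) (𝓝[>] 0) atTop) :
    iteratedDerivWithin 3 f (Icc 0 r) 0 = 0 := by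
  by_contra hne
  rw [iteratedDerivWithin_succ] at hne
  have hc := (differentiableWithinAt_of_derivWithin_ne_zero hne).continuousWithinAt
  obtain ⟨C, hC⟩ : ∃ C, ∀ᶠ x in 𝓝[Icc 0 r] 0, |iteratedDerivWithin 2 f (Icc 0 r) x| ≤ C :=
    ⟨|iteratedDerivWithin 2 f (Icc 0 r) 0| + 1,
      (hc.abs.eventually_le_const (lt_add_one _))⟩
  have hle : 𝓝[>] (0:ℝ) ≤ 𝓝[Icc 0 r] 0 := by
    refine nhdsWithin_le_of_mem ?_
    exact mem_of_superset (Ioo_mem_nhdsGT (hδ.trans_le hδr)) Ioo_subset_Icc_self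
  obtain ⟨η, hη, hη'⟩ := (mem_nhdsGT_iff_exists_Ioo_subset).1 (hle hC)
  simp only [mem_Ioi] at hη
  set ε := min δ η with hε
  have hε0 : 0 < ε := lt_min hδ hη
  have hsub : Ioo 0 ε ⊆ Ioo 0 δ := Ioo_subset_Ioo_right (min_le_left _ _)
  have hsubI : ∀ x ∈ Ioo 0 δ, Icc 0 r ∈ 𝓝 x := fun x hx => Icc_mem_nhds hx.1 (hx.2.trans_le hδr)
  have e1 : ∀ x ∈ Ioo 0 δ, derivWithin f (Icc 0 r) x = deriv f x := fun x hx =>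
    derivWithin_of_mem_nhds (hsubI x hx)
  have e2 : ∀ x ∈ Ioo 0 δ, iteratedDerivWithin 2 f (Icc 0 r) x = deriv (deriv f) x := by
    intro x hx
    rw [iteratedDerivWithin_succ, iteratedDerivWithin_one, derivWithin_of_mem_nhds (hsubI x hx)]
    refine EventuallyEq.deriv_eq ?_
    filter_upwards [Ioo_mem_nhds hx.1 hx.2] with y hy using e1 y hy
  have d1 : ContDiffOn ℝ 1 (deriv f) (Ioo 0 δ) := hf.deriv_of_isOpen isOpen_Ioo (by norm_num)
  obtain ⟨K, hK⟩ := bdd_of_deriv hε0 ((d1.differentiableOn (by norm_num)).mono hsub) (C := C)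
    (fun x hx => by
      rw [← e2 x (hsub hx)]; exact hη' ⟨hx.1, hx.2.trans_le (min_le_right _ _)⟩)
  obtain ⟨L, hL⟩ := bdd_of_deriv hε0 ((hf.differentiableOn (by norm_num)).mono hsub) hK
  obtain ⟨x, hx1, hx2⟩ := ((hlim.eventually_gt_atTop L).and (Ioo_mem_nhdsGT hε0)).exists
  exact absurd (hL x hx2) (not_le.2 hx1)

/-- Second part of Lemma 3.1 (case j = 3): the one-sided third radial
derivatives of `p₋, p₊, ρ₋, ρ₊, s₋, s₊, M₋², M₊², q₊` vanish at `r = 0`. -/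
theorem stmt_7 (γ μ2 A cv r₀ : ℝ) (hγ : 1 < γ) (hμ2 : μ2 = (γ - 1) / (γ + 1))
    (hA : 0 < A) (hcv : 0 < cv) (hr₀ : 0 < r₀)
    (pm ρm qm wm c2m M2m pp qp ρp wp M2p sm sp : ℝ → ℝ)
    (hpm : ContDiffOn ℝ 4 pm (Set.Icc 0 r₀))
    (hρm : ContDiffOn ℝ 4 ρm (Set.Icc 0 r₀))
    (hqm : ContDiffOn ℝ 4 qm (Set.Icc 0 r₀))
    (hwm : ContDiffOn ℝ 4 wm (Set.Icc 0 r₀))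
    (hpm_pos : ∀ r ∈ Set.Icc (0:ℝ) r₀, 0 < pm r)
    (hρm_pos : ∀ r ∈ Set.Icc (0:ℝ) r₀, 0 < ρm r)
    (hqm_pos : ∀ r ∈ Set.Icc (0:ℝ) r₀, 0 < qm r)
    (hc2m : ∀ r, c2m r = γ * pm r / ρm r)
    (hM2m : ∀ r, M2m r = ρm r * (qm r) ^ 2 / (γ * pm r))
    (hpp : ∀ r, pp r = ((1 + μ2) * M2m r - μ2) * pm r)
    (hqp : ∀ r, qp r = μ2 * (qm r + (2 / (γ - 1)) * c2m r / qm r))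
    (hρp : ∀ r, ρp r = ρm r * qm r / qp r)
    (hwp : ∀ r, wp r = wm r)
    (hM2p : ∀ r, M2p r = ρp r * (qp r) ^ 2 / (γ * pp r))
    (hsm : ∀ r, sm r = cv * Real.log (pm r / (A * ρm r ^ γ)))
    (hsp : ∀ r, sp r = cv * Real.log (pp r / (A * ρp r ^ γ)))
    (h1 : ∀ r ∈ Set.Icc (0:ℝ) r₀,
      r * derivWithin pm (Set.Icc 0 r₀) r = ρm r * (wm r) ^ 2)
    (h2 : ∀ r ∈ Set.Icc (0:ℝ) r₀,
      r * derivWithin (fun s => 1 / M2m s) (Set.Icc 0 r₀) r =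
        ((γ - 1) * (wm r) ^ 2 / (4 * (qm r) ^ 2)) *
          ((γ + 1) ^ 2 / (γ - 1 + 2 / M2m r) - (γ - 1 + 2 / M2m r)))
    (h3 : wm 0 = 0) (h3' : wm r₀ = 0)
    (h3'' : iteratedDerivWithin 2 wm (Set.Icc 0 r₀) 0 = 0)
    (h4 : derivWithin qm (Set.Icc 0 r₀) 0 = 0)
    (h4' : derivWithin qm (Set.Icc 0 r₀) r₀ = 0)
    (h4'' : iteratedDerivWithin 3 qm (Set.Icc 0 r₀) 0 = 0) :
    iteratedDerivWithin 3 pm (Set.Icc 0 r₀) 0 = 0 ∧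
    iteratedDerivWithin 3 pp (Set.Icc 0 r₀) 0 = 0 ∧
    iteratedDerivWithin 3 ρm (Set.Icc 0 r₀) 0 = 0 ∧
    iteratedDerivWithin 3 ρp (Set.Icc 0 r₀) 0 = 0 ∧
    iteratedDerivWithin 3 sm (Set.Icc 0 r₀) 0 = 0 ∧
    iteratedDerivWithin 3 sp (Set.Icc 0 r₀) 0 = 0 ∧
    iteratedDerivWithin 3 M2m (Set.Icc 0 r₀) 0 = 0 ∧
    iteratedDerivWithin 3 M2p (Set.Icc 0 r₀) 0 = 0 ∧
    iteratedDerivWithin 3 qp (Set.Icc 0 r₀) 0 = 0 := by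
  have hu := uniqueDiffOn_Icc hr₀
  have hm0 : (0:ℝ) ∈ Icc 0 r₀ := left_mem_Icc.2 hr₀.le
  have hμ : 0 < μ2 := by rw [hμ2]; exact div_pos (by linarith) (by linarith)
  have hγ1 : 0 < γ - 1 := by linarith
  have hγ0 : 0 < γ := by linarith
  have hM_pos : ∀ x ∈ Icc 0 r₀, 0 < M2m x := fun x hx => by
    have := hpm_pos x hx; have := hρm_pos x hx; have := hqm_pos x hx
    rw [hM2m]; positivity
  have hc_pos : ∀ x ∈ Icc 0 r₀, 0 < c2m x := fun x hx => by
    have := hpm_pos x hx; have := hρm_pos x hx; have := hqm_pos x hx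
    rw [hc2m]; positivity
  have hqp_pos : ∀ x ∈ Icc 0 r₀, 0 < qp x := fun x hx => by
    have := hc_pos x hx; have := hqm_pos x hx
    rw [hqp]; positivity
  have hρp_pos : ∀ x ∈ Icc 0 r₀, 0 < ρp x := fun x hx => by
    have := hρm_pos x hx; have := hqm_pos x hx; have := hqp_pos x hx
    rw [hρp]; positivity
  have cM : ContDiffOn ℝ 4 M2m (Icc 0 r₀) := by
    rw [funext hM2m]
    exact (hρm.mul (hqm.pow 2)).div (contDiffOn_const.mul hpm)
      (fun x hx => (mul_pos hγ0 (hpm_pos x hx)).ne')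
  have cm : ContDiffOn ℝ 4 (fun s => 1 / M2m s) (Icc 0 r₀) :=
    contDiffOn_const.div cM (fun x hx => (hM_pos x hx).ne')
  have cc : ContDiffOn ℝ 4 c2m (Icc 0 r₀) := by
    rw [funext hc2m]
    exact (contDiffOn_const.mul hpm).div hρm (fun x hx => (hρm_pos x hx).ne')
  have cpp : ContDiffOn ℝ 4 pp (Icc 0 r₀) := by
    rw [funext hpp]
    exact ((contDiffOn_const.mul cM).sub contDiffOn_const).mul hpm
  have cqp : ContDiffOn ℝ 4 qp (Icc 0 r₀) := by
    rw [funext hqp]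
    exact contDiffOn_const.mul (hqm.add ((contDiffOn_const.mul cc).div hqm
      (fun x hx => (hqm_pos x hx).ne')))
  have cρp : ContDiffOn ℝ 4 ρp (Icc 0 r₀) := by
    rw [funext hρp]
    exact (hρm.mul hqm).div cqp (fun x hx => (hqp_pos x hx).ne')
  have hden : ∀ x ∈ Icc 0 r₀, 0 < γ - 1 + 2 / M2m x := fun x hx => by
    have := hM_pos x hx; positivity
  have cden : ContDiffOn ℝ 4 (fun x => γ - 1 + 2 / M2m x) (Icc 0 r₀) :=
    contDiffOn_const.add (contDiffOn_const.div cM (fun x hx => (hM_pos x hx).ne'))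
  have cB : ContDiffOn ℝ 4 (fun x => (γ + 1) ^ 2 / (γ - 1 + 2 / M2m x) - (γ - 1 + 2 / M2m x))
      (Icc 0 r₀) := (contDiffOn_const.div cden (fun x hx => (hden x hx).ne')).sub cden
  have hw3 : ContDiffWithinAt ℝ 3 wm (Icc 0 r₀) 0 := (hwm 0 hm0).of_le (by norm_num)
  have Eq1 : EV1 r₀ qm := ⟨(hqm 0 hm0).of_le (by norm_num), by rw [iteratedDerivWithin_one, h4]⟩
  have Eq : EV3 r₀ qm := ⟨Eq1, h4''⟩
  have q0 := (hqm_pos 0 hm0).ne'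
  have ρ0 := (hρm_pos 0 hm0).ne'
  have p0 := (hpm_pos 0 hm0).ne'
  have M0 := (hM_pos 0 hm0).ne'
  -- ODE for p
  obtain ⟨Ep1, Ep3⟩ := ode hr₀ (hpm 0 hm0) ((hρm 0 hm0).of_le (by norm_num)) hw3 h3 h1
  -- ODE for 1 / M^2
  have cG : ContDiffOn ℝ 4 (fun x => (γ - 1) / (4 * qm x ^ 2) *
      ((γ + 1) ^ 2 / (γ - 1 + 2 / M2m x) - (γ - 1 + 2 / M2m x))) (Icc 0 r₀) :=
    (contDiffOn_const.div (contDiffOn_const.mul (hqm.pow 2))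
      (fun x hx => by have := hqm_pos x hx; positivity)).mul cB
  have h2' : ∀ x ∈ Icc (0:ℝ) r₀,
      x * derivWithin (fun s => 1 / M2m s) (Icc 0 r₀) x =
      ((γ - 1) / (4 * qm x ^ 2) *
      ((γ + 1) ^ 2 / (γ - 1 + 2 / M2m x) - (γ - 1 + 2 / M2m x))) * wm x ^ 2 := by
    intro x hx
    rw [h2 x hx]; ring
  obtain ⟨Em1, Em3⟩ := ode hr₀ (cm 0 hm0) ((cG 0 hm0).of_le (by norm_num)) hw3 h3 h2'
  have hev : ∀ {P : ℝ → Prop}, (∀ x ∈ Icc 0 r₀, P x) → ∀ᶠ x in 𝓝[Icc 0 r₀] 0, P x :=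
    fun h => eventually_nhdsWithin_of_forall h
  have im0 : (1 / M2m 0) ≠ 0 := by positivity
  have ρeq : ∀ x ∈ Icc 0 r₀, ρm x = γ * pm x / (1 / M2m x * qm x ^ 2) ^ 1 := fun x hx => by
    have := (hpm_pos x hx).ne'; have := (hρm_pos x hx).ne'; have := (hqm_pos x hx).ne'
    rw [hM2m]; field_simp
  simp only [pow_one] at ρeq
  have iq0 : 1 / M2m 0 * qm 0 ^ 2 ≠ 0 := by positivity
  have Eρ1 : EV1 r₀ ρm := ((Ep1.cmul hr₀ γ).div hr₀ (Em1.mul hr₀ (Eq1.sq hr₀)) iq0).congr hr₀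
    (hev ρeq)
  have EM1 : EV1 r₀ M2m := by
    have := Em1.inv hr₀ im0
    simpa using this
  have Eden1 : EV1 r₀ (fun x => γ - 1 + 2 / M2m x) :=
    (EV1.const r₀ (γ - 1)).add hr₀ ((EV1.const r₀ 2).div hr₀ EM1 M0)
  have EG1 := ((EV1.const r₀ (γ - 1)).div hr₀ ((Eq1.sq hr₀).cmul hr₀ 4) (by positivity)).mul hr₀
    (((EV1.const r₀ ((γ + 1) ^ 2)).div hr₀ Eden1 (hden 0 hm0).ne').sub hr₀ Eden1)
  have Ep : EV3 r₀ pm := Ep3 h3'' Eρ1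
  have Em := Em3 h3'' EG1
  have Eρ : EV3 r₀ ρm := ((Ep.cmul hr₀ γ).div hr₀ (Em.mul hr₀ (Eq.sq hr₀)) iq0).congr hr₀
    (hev ρeq)
  have EM : EV3 r₀ M2m := by
    have := Em.inv hr₀ im0
    simpa using this
  have Ec : EV3 r₀ c2m := by
    rw [funext hc2m]; exact (Ep.cmul hr₀ γ).div hr₀ Eρ ρ0
  have Epp : EV3 r₀ pp := by
    rw [funext hpp]; exact ((EM.cmul hr₀ _).sub hr₀ (EV3.const _ _)).mul hr₀ Ep
  have Eqp : EV3 r₀ qp := by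
    rw [funext hqp]; exact (Eq.add hr₀ ((Ec.cmul hr₀ _).div hr₀ Eq q0)).cmul hr₀ _
  have Eρp : EV3 r₀ ρp := by
    rw [funext hρp]; exact (Eρ.mul hr₀ Eq).div hr₀ Eqp (hqp_pos 0 hm0).ne'
  have logeq : ∀ a b : ℝ, a ≠ 0 → 0 < b →
      Real.log (a / (A * b ^ γ)) = Real.log a - (Real.log A + γ * Real.log b) := by
    intro a b ha hb
    have hb' : b ^ γ ≠ 0 := (Real.rpow_pos_of_pos hb γ).ne'
    rw [Real.log_div ha (mul_ne_zero hA.ne' hb'), Real.log_mul hA.ne' hb', Real.log_rpow hb]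
  have Esm : EV3 r₀ sm := by
    refine ((((Ep.log hr₀ p0).sub hr₀ ((EV3.const r₀ (Real.log A)).add hr₀
      ((Eρ.log hr₀ ρ0).cmul hr₀ γ)))).cmul hr₀ cv).congr hr₀ (hev fun x hx => ?_)
    rw [hsm, logeq _ _ (hpm_pos x hx).ne' (hρm_pos x hx)]
  suffices hfin : iteratedDerivWithin 3 M2p (Icc 0 r₀) 0 = 0 ∧
      iteratedDerivWithin 3 sp (Icc 0 r₀) 0 = 0 from
    ⟨Ep.2, Epp.2, Eρ.2, Eρp.2, Esm.2, hfin.2, EM.2, hfin.1, Eqp.2⟩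
  by_cases hpp0 : pp 0 ≠ 0
  · constructor
    · have : EV3 r₀ M2p := by
        rw [funext hM2p]
        exact (Eρp.mul hr₀ (Eqp.sq hr₀)).div hr₀ (Epp.cmul hr₀ γ) (mul_ne_zero hγ0.ne' hpp0)
      exact this.2
    · have : EV3 r₀ sp := by
        refine ((((Epp.log hr₀ hpp0).sub hr₀ ((EV3.const r₀ (Real.log A)).add hr₀
          ((Eρp.log hr₀ (hρp_pos 0 hm0).ne').cmul hr₀ γ)))).cmul hr₀ cv).congr hr₀ ?_
        filter_upwards [Epp.1.1.continuousWithinAt.eventually_ne hpp0, self_mem_nhdsWithin]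
          with x hx hxm
        rw [hsp, logeq _ _ hx (hρp_pos x hxm)]
      exact this.2
  -- degenerate case: the downstream pressure vanishes at the axis
  push Not at hpp0
  have hmc : (1 + μ2) * M2m 0 = μ2 := by
    have := hpp 0
    rw [hpp0] at this
    have := (mul_eq_zero.1 this.symm).resolve_right p0
    linarith
  have hM0v : M2m 0 = (γ - 1) / (2 * γ) := by
    rw [hμ2] at hmc
    field_simp at hmc ⊢
    linarith
  have hB0 : (γ + 1) ^ 2 / (γ - 1 + 2 / M2m 0) - (γ - 1 + 2 / M2m 0) < 0 := by
    have e : γ - 1 + 2 / M2m 0 = (γ + 1) ^ 2 / (γ - 1) := by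
      rw [hM0v]; field_simp; ring
    have h1' : (γ + 1) ^ 2 / ((γ + 1) ^ 2 / (γ - 1)) = γ - 1 := by field_simp
    rw [e, h1', sub_neg, lt_div_iff₀ hγ1]
    nlinarith
  have hBev := (cB.continuousOn 0 hm0).eventually_lt_const hB0
  have hle : 𝓝[≥] (0:ℝ) ≤ 𝓝[Icc 0 r₀] 0 :=
    nhdsWithin_le_of_mem (Icc_mem_nhdsGE hr₀)
  obtain ⟨η, hη, hη'⟩ := (mem_nhdsGE_iff_exists_Ico_subset).1 (hle hBev)
  simp only [mem_Ioi] at hη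
  obtain ⟨ε, hε0, hεη, hεr⟩ : ∃ ε, 0 < ε ∧ ε ≤ η ∧ ε ≤ r₀ :=
    ⟨min η r₀, lt_min hη hr₀, min_le_left _ _, min_le_right _ _⟩
  have hsub : Ico 0 ε ⊆ Icc 0 r₀ := fun x hx => ⟨hx.1, hx.2.le.trans hεr⟩
  have hanti : AntitoneOn (fun s => 1 / M2m s) (Ico 0 ε) := by
    refine antitoneOn_of_deriv_nonpos (convex_Ico _ _) (cm.continuousOn.mono hsub)
      ((cm.differentiableOn (by norm_num)).mono (interior_subset.trans hsub)) ?_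
    intro x hx
    rw [interior_Ico] at hx
    have hxI : x ∈ Icc 0 r₀ := hsub ⟨hx.1.le, hx.2⟩
    have hq := hqm_pos x hxI
    have hB : (γ + 1) ^ 2 / (γ - 1 + 2 / M2m x) - (γ - 1 + 2 / M2m x) < 0 :=
      hη' ⟨hx.1.le, hx.2.trans_le hεη⟩
    have h := h2 x hxI
    rw [derivWithin_of_mem_nhds (Icc_mem_nhds hx.1 (hx.2.trans_le hεr))] at h
    have hc : 0 ≤ (γ - 1) * wm x ^ 2 / (4 * qm x ^ 2) := by positivity
    have := mul_nonpos_of_nonneg_of_nonpos hc hB.le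
    rw [← h] at this
    by_contra hcon
    push Not at hcon
    have := mul_pos hx.1 hcon
    linarith
  have ppeq : ∀ x, pp x = (1 + μ2) * (M2m x - M2m 0) * pm x := fun x => by
    rw [hpp]; linear_combination pm x * hmc
  by_cases hcase : ∃ δ ∈ Ioo 0 ε, M2m δ = M2m 0
  · obtain ⟨δ, hδ, hδM⟩ := hcase
    have hz : ∀ᶠ x in 𝓝[Icc 0 r₀] (0:ℝ), pp x = 0 := by
      filter_upwards [self_mem_nhdsWithin, mem_nhdsWithin_of_mem_nhds (Iio_mem_nhds hδ.1)]
        with x hxI hxδ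
      have hxε : x ∈ Ico 0 ε := ⟨hxI.1, lt_trans hxδ hδ.2⟩
      have a1 := hanti (left_mem_Ico.2 hε0) hxε hxI.1
      have a2 := hanti hxε ⟨hδ.1.le, hδ.2⟩ (le_of_lt hxδ)
      simp only [hδM] at a1 a2
      have : M2m x = M2m 0 := by
        have := le_antisymm a1 a2
        simpa using this
      rw [ppeq, this]; ring
    constructor
    · refine ((EV3.const r₀ 0).congr hr₀ (g := M2p) ?_).2
      filter_upwards [hz] with x hx
      rw [hM2p, hx]; simp
    · refine ((EV3.const r₀ 0).congr hr₀ (g := sp) ?_).2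
      filter_upwards [hz] with x hx
      rw [hsp, hx]; simp
  push Not at hcase
  have hpp_pos : ∀ x ∈ Ioo 0 ε, 0 < pp x := by
    intro x hx
    have hxI := hsub ⟨hx.1.le, hx.2⟩
    have a1 := hanti (left_mem_Ico.2 hε0) ⟨hx.1.le, hx.2⟩ hx.1.le
    have a2 := (one_div_le_one_div (hM_pos x hxI) (hM_pos 0 hm0)).1 a1
    have a3 : 0 < M2m x - M2m 0 := sub_pos.2 (lt_of_le_of_ne a2 (hcase x hx).symm)
    have := hpm_pos x hxI
    rw [ppeq]; positivity
  have hsub' : Ioo 0 ε ⊆ Icc 0 r₀ := Ioo_subset_Ico_self.trans hsub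
  have hle' : 𝓝[>] (0:ℝ) ≤ 𝓝[Icc 0 r₀] 0 :=
    nhdsWithin_le_of_mem (mem_of_superset (Ioo_mem_nhdsGT hr₀) Ioo_subset_Icc_self)
  have tpp : Tendsto pp (𝓝[>] 0) (𝓝[>] 0) := by
    refine tendsto_nhdsWithin_iff.2 ⟨?_, ?_⟩
    · have := (cpp.continuousOn 0 hm0).tendsto.mono_left hle'
      rwa [hpp0] at this
    · filter_upwards [Ioo_mem_nhdsGT hε0] with x hx using hpp_pos x hx
  have tρ : Tendsto ρp (𝓝[>] 0) (𝓝 (ρp 0)) := (cρp.continuousOn 0 hm0).tendsto.mono_left hle'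
  have tq : Tendsto qp (𝓝[>] 0) (𝓝 (qp 0)) := (cqp.continuousOn 0 hm0).tendsto.mono_left hle'
  have hρ0 := hρp_pos 0 hm0
  have hq0 := hqp_pos 0 hm0
  have dpp := (cpp.mono hsub').of_le (show (2 : WithTop ℕ∞) ≤ 4 by norm_num)
  have dρp := (cρp.mono hsub').of_le (show (2 : WithTop ℕ∞) ≤ 4 by norm_num)
  have dqp := (cqp.mono hsub').of_le (show (2 : WithTop ℕ∞) ≤ 4 by norm_num)
  constructor
  · refine degen hε0 hεr ?_ ?_
    · rw [funext hM2p]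
      exact (dρp.mul (dqp.pow 2)).div (contDiffOn_const.mul dpp)
        (fun x hx => (mul_pos hγ0 (hpp_pos x hx)).ne')
    · refine tendsto_abs_atTop_atTop.comp ?_
      have : Tendsto (fun x => (ρp x * qp x ^ 2 / γ) * (pp x)⁻¹) (𝓝[>] 0) atTop :=
        ((tρ.mul (tq.pow 2)).div_const γ).pos_mul_atTop (by positivity)
          (tendsto_inv_nhdsGT_zero.comp tpp)
      refine this.congr fun x => ?_
      rw [hM2p, div_mul_eq_div_div, div_eq_mul_inv _ (pp x)]
  · have speq : ∀ x ∈ Ioo 0 ε,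
        sp x = cv * (Real.log (pp x) - (Real.log A + γ * Real.log (ρp x))) := fun x hx => by
      rw [hsp, logeq _ _ (hpp_pos x hx).ne' (hρp_pos x (hsub' hx))]
    refine degen hε0 hεr ?_ ?_
    · refine ContDiffOn.congr ?_ speq
      exact contDiffOn_const.mul ((dpp.log fun x hx => (hpp_pos x hx).ne').sub
        (contDiffOn_const.add (contDiffOn_const.mul
          (dρp.log fun x hx => (hρp_pos x (hsub' hx)).ne'))))
    · refine tendsto_abs_atBot_atTop.comp ?_
      have t1 : Tendsto (fun x => Real.log (pp x)) (𝓝[>] 0) atBot :=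
        Real.tendsto_log_nhdsGT_zero.comp tpp
      have t2 : Tendsto (fun x => -(Real.log A + γ * Real.log (ρp x))) (𝓝[>] 0)
          (𝓝 (-(Real.log A + γ * Real.log (ρp 0)))) :=
        (tendsto_const_nhds.add (tendsto_const_nhds.mul (tρ.log hρ0.ne'))).neg
      have t3 := (t1.atBot_add t2).const_mul_atBot hcv
      refine t3.congr' ?_
      filter_upwards [Ioo_mem_nhdsGT hε0] with x hx
      rw [speq x hx]; ring
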